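/- arXiv:1611.06560 — 2 statements merged into one kernel-verified Lean document; each statement's English description precedes it below -/
import Mathlib

section
/- (Fréchet differentiability.) Let $X$ be a complex Banach space, $LB(X)$ the algebra of bounded linear operators on $X$ with the operator norm $\|\cdot\|$, and let $(\mathcal I,\|\cdot\|_{\mathcal I})$ be an operator ideal in $X$: a two-sided ideal of $LB(X)$, complete with respect to a norm $\|\cdot\|_{\mathcal I}$ such that $\|PSQ\|_{\mathcal I}\le\|P\|\,\|S\|_{\mathcal I}\,\|Q\|$ and $\|S\|\le\|S\|_{\mathcal I}$ for all $P,Q\in LB(X)$, $S\in\mathcal I$ (the case $\mathcal I=LB(X)$ with the operator norm is included). Let $a<b$ be real numbers, let $\tau$ be a finite positive Borel measure on $[a,b]$, and let $f(z)=\int_a^b\frac{z}{t-z}\,d\tau(t)$. Denote by $V_{[a,b]}(X)$ the set of closed densely defined linear operators $A$ in $X$ (in particular, bounded ones) whose resolvent set contains $[a,b]$. For $A\in V_{[a,b]}(X)$ put $R(t,A)=(tI-A)^{-1}$, $m_A=\max_{t\in[a,b]}\|R(t,A)\|$, and $f(A)=\int_a^b A\,R(t,A)\,d\tau(t)$, a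 Bochner integral in the operator norm. Let $A\in V_{[a,b]}(X)$. The integral defining $f(A)$ and, for every $B\in\mathcal I$, the integral $f_A^\nabla(B)=\int_a^b R(t,A)\,B\,R(t,A)\,t\,d\tau(t)$ exist as Bochner integrals, in the operator norm and in the norm of $\mathcal I$ respectively. If $\Delta A\in\mathcal I$ and $\|\Delta A\|_{\mathcal I}\le \frac1{2m_A}$ (for $X=\{0\}$, where $m_A=0$, the right-hand side is read as $0$), then $A+\Delta A$ (with domain $D(A)$) belongs to $V_{[a,b]}(X)$, so that $[a,b]$ is contained in its resolvent set, the operator $f(A+\Delta A)-f(A)$ belongs to $\mathcal I$, and $$\bigl\|f(A+\Delta A)-f(A)-f_A^\nabla(\Delta A)\bigr\|_{\mathcal I}\le 2\,m_A^3\Bigl(\int_a^b |t|\,d\tau(t)\Bigr)\|\Delta A\|_{\mathcal I}^2 .$$ In particular, the $\mathcal I$-valued map $B\mapsto f(A+B)-f(A)$, defined in a neighbourhood of $0$ in $\mathcal I$, is Fréchet differentiable at $B=0$, and its derivative is the bounded linear transformer $f_A^\nabla$ on $\mathcal I$. (If $a\ge 0$, then $\int_a^b|t|\,d\tau(t)=\int_a^b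 t\,d\tau(t)$.) -/
open MeasureTheory Set

namespace ZRCalculus

section ClosedOperators

variable {X : Type*} [NormedAddCommGroup X] [NormedSpace ℂ X]

/-- The bounded everywhere defined operator `R` is a two-sided inverse of `z·I − A`:
it maps `X` into `D(A)`, `(z·I − A) R x = x` for all `x`, and `R (z·I − A) x = x` on `D(A)`. -/
def IsResolventAt (A : X →ₗ.[ℂ] X) (z : ℂ) (R : X →L[ℂ] X) : Prop :=
  (∀ x : X, ∃ h : R x ∈ A.domain, z • R x - A ⟨R x, h⟩ = x) ∧
    ∀ x : A.domain, R (z • (x : X) - A x) = x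

/-- The resolvent set `ρ(A)` of a (possibly unbounded) operator. -/
def opResolventSet (A : X →ₗ.[ℂ] X) : Set ℂ :=
  {z | ∃ R : X →L[ℂ] X, IsResolventAt A z R}

open Classical in
/-- The resolvent `R(z, A) = (z·I − A)⁻¹` for `z ∈ ρ(A)`; it is `0` for `z ∉ ρ(A)`. -/
noncomputable def opResolvent (A : X →ₗ.[ℂ] X) (z : ℂ) : X →L[ℂ] X :=
  if h : z ∈ opResolventSet A then h.choose else 0

theorem isResolventAt_opResolvent {A : X →ₗ.[ℂ] X} {z : ℂ} (hz : z ∈ opResolventSet A) :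
    IsResolventAt A z (opResolvent A z) := by
  rw [opResolvent, dif_pos hz]
  exact hz.choose_spec

theorem opResolvent_mem_domain {A : X →ₗ.[ℂ] X} {z : ℂ} (hz : z ∈ opResolventSet A) (x : X) :
    opResolvent A z x ∈ A.domain :=
  ((isResolventAt_opResolvent hz).1 x).1

theorem apply_opResolvent {A : X →ₗ.[ℂ] X} {z : ℂ} (hz : z ∈ opResolventSet A) (x : X) :
    A ⟨opResolvent A z x, opResolvent_mem_domain hz x⟩ = z • opResolvent A z x - x := by
  obtain ⟨h, hx⟩ := (isResolventAt_opResolvent hz).1 x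
  rw [eq_sub_iff_add_eq, ← eq_sub_iff_add_eq']
  exact hx.symm

open Classical in
/-- The bounded operator `A R(z, A) : x ↦ A (R(z, A) x)` for `z ∈ ρ(A)`; it is `0` for
`z ∉ ρ(A)`. -/
noncomputable def mulResolvent (A : X →ₗ.[ℂ] X) (z : ℂ) : X →L[ℂ] X :=
  if hz : z ∈ opResolventSet A then
    { toLinearMap := A.toFun.comp
        ((opResolvent A z : X →ₗ[ℂ] X).codRestrict A.domain (opResolvent_mem_domain hz))
      cont := by
        have h : Continuous fun x : X => z • opResolvent A z x - x := by fun_prop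
        exact h.congr fun x => (apply_opResolvent hz x).symm }
  else 0

/-- The class `V_{[a,b]}(X)` of closed densely defined operators `A` with `[a,b] ⊆ ρ(A)`. -/
structure MemV (a b : ℝ) (A : X →ₗ.[ℂ] X) : Prop where
  isClosed : A.IsClosed
  dense : Dense (A.domain : Set X)
  mem_opResolventSet : ∀ t ∈ Icc a b, (t : ℂ) ∈ opResolventSet A

/-- `m_A = max_{t ∈ [a,b]} ‖R(t, A)‖`. -/
noncomputable def mConst (a b : ℝ) (A : X →ₗ.[ℂ] X) : ℝ :=
  sSup ((fun t : ℝ => ‖opResolvent A (t : ℂ)‖) '' Icc a b)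

/-- `f(A) = ∫_a^b A R(t, A) dτ(t)`, a Bochner integral in the operator norm, where `τ` is the
representing measure of `f`. -/
noncomputable def fOp (τ : Measure ℝ) (a b : ℝ) (A : X →ₗ.[ℂ] X) : X →L[ℂ] X :=
  ∫ t in Icc a b, mulResolvent A (t : ℂ) ∂τ

/-- The sum `A + B` of an operator `A` and a bounded operator `B`, with domain `D(A)`. -/
def perturb (A : X →ₗ.[ℂ] X) (B : X →L[ℂ] X) : X →ₗ.[ℂ] X :=
  (B : X →ₗ[ℂ] X) +ᵥ A

end ClosedOperators

/-- An operator ideal in `X`: a two-sided ideal of the algebra of bounded operators on `X`,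
complete with respect to a norm `idealNorm` such that `‖P S Q‖_I ≤ ‖P‖ ‖S‖_I ‖Q‖` and
`‖S‖ ≤ ‖S‖_I`. (Definiteness of `idealNorm` follows from the last inequality.) -/
structure OperatorIdeal (X : Type*) [NormedAddCommGroup X] [NormedSpace ℂ X] where
  carrier : Submodule ℂ (X →L[ℂ] X)
  mul_mul_mem : ∀ (P Q : X →L[ℂ] X) {S : X →L[ℂ] X}, S ∈ carrier → P * S * Q ∈ carrier
  idealNorm : Seminorm ℂ carrier
  idealNorm_mul_mul_le : ∀ (P Q : X →L[ℂ] X) (S : carrier),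
    idealNorm ⟨P * S * Q, mul_mul_mem P Q S.2⟩ ≤ ‖P‖ * idealNorm S * ‖Q‖
  opNorm_le : ∀ S : carrier, ‖(S : X →L[ℂ] X)‖ ≤ idealNorm S
  complete : ∀ u : ℕ → carrier,
    (∀ ε > 0, ∃ N, ∀ m ≥ N, ∀ n ≥ N, idealNorm (u m - u n) < ε) →
      ∃ S : carrier, ∀ ε > 0, ∃ N, ∀ n ≥ N, idealNorm (u n - S) < ε

namespace OperatorIdeal

variable {X : Type*} [NormedAddCommGroup X] [NormedSpace ℂ X]

/-- The elements of the ideal, as a Banach space under the ideal norm (not under the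
operator norm). -/
def Elem (I : OperatorIdeal X) : Type _ := I.carrier

/-- An element of the ideal, as a bounded operator. -/
def Elem.val {I : OperatorIdeal X} (S : I.Elem) : X →L[ℂ] X := Subtype.val S

noncomputable instance (I : OperatorIdeal X) : AddCommGroup I.Elem :=
  inferInstanceAs (AddCommGroup I.carrier)

noncomputable instance (I : OperatorIdeal X) : Module ℂ I.Elem :=
  inferInstanceAs (Module ℂ I.carrier)

noncomputable instance (I : OperatorIdeal X) : NormedAddCommGroup I.Elem :=
  AddGroupNorm.toNormedAddCommGroup
    { toFun := fun S : I.Elem => I.idealNorm S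
      map_zero' := map_zero I.idealNorm
      add_le' := map_add_le_add I.idealNorm
      neg' := map_neg_eq_map I.idealNorm
      eq_zero_of_map_eq_zero' := fun S hS => Subtype.ext
        (norm_le_zero_iff.1 ((I.opNorm_le S).trans_eq hS)) }

noncomputable instance (I : OperatorIdeal X) : NormedSpace ℂ I.Elem where
  norm_smul_le c S := (map_smul_eq_mul I.idealNorm c S).le

instance (I : OperatorIdeal X) : CompleteSpace I.Elem :=
  Metric.complete_of_cauchySeq_tendsto fun u hu => by
    obtain ⟨S, hS⟩ := I.complete u fun ε hε => by
      obtain ⟨N, hN⟩ := Metric.cauchySeq_iff.1 hu ε hε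
      exact ⟨N, fun m hm n hn => (dist_eq_norm (u m) (u n)).symm.trans_lt (hN m hm n hn)⟩
    refine ⟨S, Metric.tendsto_atTop.2 fun ε hε => ?_⟩
    obtain ⟨N, hN⟩ := hS ε hε
    exact ⟨N, fun n hn => (dist_eq_norm (E := I.Elem) (u n) S).trans_lt (hN n hn)⟩

/-- The product `P S Q`, as an element of the ideal. -/
def sandwich (I : OperatorIdeal X) (P : X →L[ℂ] X) (S : I.Elem) (Q : X →L[ℂ] X) : I.Elem :=
  ⟨P * S.val * Q, I.mul_mul_mem P Q S.2⟩

end OperatorIdeal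

section Transformer

variable {X : Type*} [NormedAddCommGroup X] [NormedSpace ℂ X]

/-- The integrand `R(t, A) B R(t, A) t` of the transformer, with values in the ideal. -/
noncomputable def fDerIntegrand (I : OperatorIdeal X) (A : X →ₗ.[ℂ] X) (B : I.Elem)
    (t : ℝ) : I.Elem :=
  (t : ℂ) • I.sandwich (opResolvent A (t : ℂ)) B (opResolvent A (t : ℂ))

/-- The transformer `B ↦ ∫_a^b R(t, A) B R(t, A) t dτ(t)` on the ideal, a Bochner integral in
the ideal norm. -/
noncomputable def fDer (I : OperatorIdeal X) (τ : Measure ℝ) (a b : ℝ) (A : X →ₗ.[ℂ] X)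
    (B : I.Elem) : I.Elem :=
  ∫ t in Icc a b, fDerIntegrand I A B t ∂τ

open Classical in
/-- The increment `f(A + B) − f(A)`, as an element of the ideal when it belongs to the ideal
(and `0` otherwise). -/
noncomputable def fIncrement (I : OperatorIdeal X) (τ : Measure ℝ) (a b : ℝ)
    (A : X →ₗ.[ℂ] X) (B : I.Elem) : I.Elem :=
  if h : fOp τ a b (perturb A B.val) - fOp τ a b A ∈ I.carrier then ⟨_, h⟩ else 0

end Transformer

end ZRCalculus

open ZRCalculus

namespace ZRCalculus

section Resolvent

variable {X : Type*} [NormedAddCommGroup X] [NormedSpace ℂ X]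

theorem IsResolventAt.unique {A : X →ₗ.[ℂ] X} {z : ℂ} {R S : X →L[ℂ] X}
    (hR : IsResolventAt A z R) (hS : IsResolventAt A z S) : R = S := by
  ext x
  obtain ⟨h, hx⟩ := hS.1 x
  have := hR.2 ⟨S x, h⟩
  rwa [hx] at this

theorem IsResolventAt.opResolvent_eq {A : X →ₗ.[ℂ] X} {z : ℂ} {R : X →L[ℂ] X}
    (hR : IsResolventAt A z R) : opResolvent A z = R :=
  (isResolventAt_opResolvent ⟨R, hR⟩).unique hR

theorem mulResolvent_eq {A : X →ₗ.[ℂ] X} {z : ℂ} (hz : z ∈ opResolventSet A) :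
    mulResolvent A z = z • opResolvent A z - 1 := by
  ext x
  rw [mulResolvent, dif_pos hz]
  exact apply_opResolvent hz x

theorem isClosed_of_mem_opResolventSet {A : X →ₗ.[ℂ] X} {z : ℂ} (hz : z ∈ opResolventSet A) :
    A.IsClosed := by
  obtain ⟨R, hR⟩ := hz
  have hgraph : (A.graph : Set (X × X)) = {p | R (z • p.1 - p.2) = p.1} := by
    ext ⟨x, y⟩
    simp only [SetLike.mem_coe, LinearPMap.mem_graph_iff, mem_ofPred_eq]
    constructor
    · rintro ⟨w, rfl, rfl⟩
      exact hR.2 w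
    · intro h
      obtain ⟨hw, hw'⟩ := hR.1 (z • x - y)
      refine ⟨⟨_, hw⟩, h, ?_⟩
      have hz : z • R (z • x - y) = z • x := congrArg (z • ·) h
      exact sub_right_injective ((congrArg (· - A ⟨_, hw⟩) hz.symm).trans hw')
  rw [LinearPMap.IsClosed, hgraph]
  exact isClosed_eq (by fun_prop) (by fun_prop)

/-- If `1 - B R` is invertible then `z·I − (A + B) = (1 - B R) (z·I − A)` is invertible. -/
theorem IsResolventAt.perturb {A : X →ₗ.[ℂ] X} {z : ℂ} {R B : X →L[ℂ] X}
    (hR : IsResolventAt A z R) (hu : IsUnit (1 - B * R)) :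
    IsResolventAt (perturb A B) z (R * Ring.inverse (1 - B * R)) := by
  set U := Ring.inverse (1 - B * R)
  have h₁ : ∀ x, U x - B (R (U x)) = x := fun x =>
    congrArg (fun S : X →L[ℂ] X => S x) (Ring.mul_inverse_cancel _ hu)
  have h₂ : ∀ x, U (x - B (R x)) = x := fun x =>
    congrArg (fun S : X →L[ℂ] X => S x) (Ring.inverse_mul_cancel _ hu)
  refine ⟨fun x => ?_, fun x => ?_⟩
  · obtain ⟨h, hx⟩ := hR.1 (U x)
    refine ⟨h, ?_⟩
    change z • R (U x) - (B (R (U x)) + A ⟨R (U x), h⟩) = x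
    rw [← sub_sub, sub_right_comm, hx, h₁]
  · have hx := hR.2 x
    change R (U (z • (x : X) - (B x + A x))) = x
    rw [← sub_sub, sub_right_comm]
    nth_rewrite 2 [← hx]
    rw [h₂, hx]

theorem isResolventAt_add_iff {A : X →ₗ.[ℂ] X} {z w : ℂ} {R : X →L[ℂ] X} :
    IsResolventAt A (z + w) R ↔ IsResolventAt (perturb A (-(w • 1))) z R := by
  have key : ∀ x : A.domain, z • (x : X) - ((-(w • (1 : X →L[ℂ] X))) (x : X) + A x) =
      (z + w) • (x : X) - A x := fun x => by
    simp only [neg_apply, smul_apply, one_apply_eq_self, add_smul]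
    abel
  constructor
  · rintro ⟨h₁, h₂⟩
    refine ⟨fun x => ?_, fun x => ?_⟩
    · obtain ⟨h, hx⟩ := h₁ x
      exact ⟨h, (key ⟨R x, h⟩).trans hx⟩
    · exact (congrArg R (key x)).trans (h₂ x)
  · rintro ⟨h₁, h₂⟩
    refine ⟨fun x => ?_, fun x => ?_⟩
    · obtain ⟨h, hx⟩ := h₁ x
      exact ⟨h, (key ⟨R x, h⟩).symm.trans hx⟩
    · exact (congrArg R (key x)).symm.trans (h₂ x)

theorem continuousAt_opResolvent [CompleteSpace X] {A : X →ₗ.[ℂ] X} {z : ℂ}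
    (hz : z ∈ opResolventSet A) : ContinuousAt (opResolvent A) z := by
  set R := opResolvent A z
  have hR : IsResolventAt A z R := isResolventAt_opResolvent hz
  let g : ℂ → X →L[ℂ] X := fun w => 1 - (-((w - z) • (1 : X →L[ℂ] X))) * R
  have hg : Continuous g := by fun_prop
  have hgz : g z = 1 := by simp [g]
  have hunit : ∀ᶠ w in nhds z, IsUnit (g w) :=
    hg.continuousAt.eventually_mem (Units.isOpen.mem_nhds (by rw [hgz]; exact isUnit_one))
  have heq : (fun w => R * Ring.inverse (g w)) =ᶠ[nhds z] opResolvent A := by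
    filter_upwards [hunit] with w hw
    have := isResolventAt_add_iff.2 (hR.perturb hw)
    rw [add_sub_cancel] at this
    exact this.opResolvent_eq.symm
  refine ContinuousAt.congr ?_ heq
  have hinv : ContinuousAt Ring.inverse (g z) := by
    rw [hgz]
    exact NormedRing.inverse_continuousAt 1
  exact continuousAt_const.mul (hinv.comp hg.continuousAt)

theorem mConst_nonneg (a b : ℝ) (A : X →ₗ.[ℂ] X) : 0 ≤ mConst a b A :=
  Real.sSup_nonneg (by rintro _ ⟨t, -, rfl⟩; exact norm_nonneg _)

variable [CompleteSpace X] {A : X →ₗ.[ℂ] X} {a b : ℝ}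

theorem MemV.continuousOn_opResolvent (hA : MemV a b A) :
    ContinuousOn (fun t : ℝ => opResolvent A (t : ℂ)) (Icc a b) := fun t ht =>
  ((continuousAt_opResolvent (hA.mem_opResolventSet t ht)).comp
    (f := fun t : ℝ => (t : ℂ)) Complex.continuous_ofReal.continuousAt).continuousWithinAt

theorem MemV.integrableOn_mulResolvent (hA : MemV a b A) (τ : Measure ℝ) [IsFiniteMeasure τ] :
    IntegrableOn (fun t : ℝ => mulResolvent A (t : ℂ)) (Icc a b) τ := by
  refine ContinuousOn.integrableOn_compact isCompact_Icc ?_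
  have h : ContinuousOn (fun t : ℝ => (t : ℂ) • opResolvent A (t : ℂ) - 1) (Icc a b) :=
    (Complex.continuous_ofReal.continuousOn.smul hA.continuousOn_opResolvent).sub
      continuousOn_const
  exact h.congr fun t ht => mulResolvent_eq (hA.mem_opResolventSet t ht)

theorem MemV.norm_opResolvent_le (hA : MemV a b A) {t : ℝ} (ht : t ∈ Icc a b) :
    ‖opResolvent A (t : ℂ)‖ ≤ mConst a b A :=
  le_csSup (isCompact_Icc.image_of_continuousOn hA.continuousOn_opResolvent.norm).bddAbove
    (mem_image_of_mem _ ht)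

theorem MemV.isUnit_one_sub_mul_opResolvent (hA : MemV a b A) {B : X →L[ℂ] X}
    (hB : ‖B‖ * mConst a b A ≤ 1 / 2) {t : ℝ} (ht : t ∈ Icc a b) :
    IsUnit (1 - B * opResolvent A (t : ℂ)) := by
  refine isUnit_one_sub_of_norm_lt_one ?_
  calc ‖B * opResolvent A (t : ℂ)‖ ≤ ‖B‖ * ‖opResolvent A (t : ℂ)‖ := norm_mul_le _ _
    _ ≤ ‖B‖ * mConst a b A := by gcongr; exact hA.norm_opResolvent_le ht
    _ < 1 := by linarith

theorem MemV.perturb (hab : a ≤ b) (hA : MemV a b A) {B : X →L[ℂ] X}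
    (hB : ‖B‖ * mConst a b A ≤ 1 / 2) : MemV a b (perturb A B) := by
  have h : ∀ t ∈ Icc a b, (t : ℂ) ∈ opResolventSet (ZRCalculus.perturb A B) := fun t ht =>
    ⟨_, (isResolventAt_opResolvent (hA.mem_opResolventSet t ht)).perturb
      (hA.isUnit_one_sub_mul_opResolvent hB ht)⟩
  exact ⟨isClosed_of_mem_opResolventSet (h a (left_mem_Icc.2 hab)), hA.dense, h⟩

/-- The second resolvent identity. -/
theorem MemV.opResolvent_perturb_sub (hA : MemV a b A) {B : X →L[ℂ] X}
    (hB : ‖B‖ * mConst a b A ≤ 1 / 2) {t : ℝ} (ht : t ∈ Icc a b) :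
    opResolvent (ZRCalculus.perturb A B) (t : ℂ) - opResolvent A (t : ℂ) =
      opResolvent (ZRCalculus.perturb A B) (t : ℂ) * B * opResolvent A (t : ℂ) := by
  have hu := hA.isUnit_one_sub_mul_opResolvent hB ht
  rw [((isResolventAt_opResolvent (hA.mem_opResolventSet t ht)).perturb hu).opResolvent_eq]
  have := Ring.inverse_mul_cancel _ hu
  have h₂ := congrArg (fun S => opResolvent A (t : ℂ) * S) this
  simp only [mul_sub, mul_one, ← mul_assoc] at h₂ ⊢
  rw [sub_eq_iff_eq_add, add_comm, ← sub_eq_iff_eq_add]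
  exact h₂

theorem MemV.norm_opResolvent_perturb_le (hA : MemV a b A) {B : X →L[ℂ] X}
    (hB : ‖B‖ * mConst a b A ≤ 1 / 2) {t : ℝ} (ht : t ∈ Icc a b) :
    ‖opResolvent (ZRCalculus.perturb A B) (t : ℂ)‖ ≤ 2 * mConst a b A := by
  have hR := hA.norm_opResolvent_le ht
  have hid := hA.opResolvent_perturb_sub hB ht
  set R := opResolvent A (t : ℂ)
  set S := opResolvent (ZRCalculus.perturb A B) (t : ℂ)
  have h₁ : ‖S‖ ≤ ‖R‖ + ‖S * B * R‖ := by
    rw [← hid]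
    exact norm_le_norm_add_norm_sub' S R
  have h₂ : ‖S * B * R‖ ≤ ‖S‖ * (1 / 2) :=
    calc ‖S * B * R‖ ≤ ‖S‖ * ‖B‖ * ‖R‖ := norm_mul₃_le
      _ = ‖S‖ * (‖B‖ * ‖R‖) := mul_assoc _ _ _
      _ ≤ ‖S‖ * (‖B‖ * mConst a b A) := by gcongr
      _ ≤ ‖S‖ * (1 / 2) := by gcongr
  linarith

end Resolvent

namespace OperatorIdeal

variable {X : Type*} [NormedAddCommGroup X] [NormedSpace ℂ X] (I : OperatorIdeal X)

theorem Elem.val_injective : Function.Injective (Elem.val (I := I)) := Subtype.val_injective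

theorem Elem.val_mem (S : I.Elem) : S.val ∈ I.carrier := S.2

theorem Elem.norm_val_le (S : I.Elem) : ‖S.val‖ ≤ ‖S‖ := I.opNorm_le S

/-- The inclusion of an operator ideal into the bounded operators. -/
noncomputable def valCLM : I.Elem →L[ℂ] (X →L[ℂ] X) :=
  LinearMap.mkContinuous
    { toFun := Elem.val
      map_add' := fun _ _ => rfl
      map_smul' := fun _ _ => rfl } 1
    fun S => (Elem.norm_val_le I S).trans_eq (one_mul _).symm

@[simp] theorem valCLM_apply (S : I.Elem) : I.valCLM S = S.val := rfl

@[simp] theorem Elem.val_add (S T : I.Elem) : (S + T).val = S.val + T.val := rfl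

@[simp] theorem Elem.val_sub (S T : I.Elem) : (S - T).val = S.val - T.val := rfl

@[simp] theorem Elem.val_smul (c : ℂ) (S : I.Elem) : (c • S).val = c • S.val := rfl

@[simp] theorem val_sandwich (P : X →L[ℂ] X) (S : I.Elem) (Q : X →L[ℂ] X) :
    (I.sandwich P S Q).val = P * S.val * Q := rfl

theorem norm_sandwich_le (P : X →L[ℂ] X) (S : I.Elem) (Q : X →L[ℂ] X) :
    ‖I.sandwich P S Q‖ ≤ ‖P‖ * ‖S‖ * ‖Q‖ := I.idealNorm_mul_mul_le P Q S

theorem isBoundedBilinearMap_sandwich (S : I.Elem) :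
    IsBoundedBilinearMap ℂ fun p : (X →L[ℂ] X) × (X →L[ℂ] X) => I.sandwich p.1 S p.2 where
  add_left _ _ _ := Elem.val_injective I (by simp [add_mul])
  smul_left _ _ _ := Elem.val_injective I (by simp)
  add_right _ _ _ := Elem.val_injective I (by simp [mul_add])
  smul_right _ _ _ := Elem.val_injective I (by simp)
  bound := by
    refine ⟨‖S‖ + 1, by positivity, fun P Q => (I.norm_sandwich_le P S Q).trans ?_⟩
    rw [mul_comm ‖P‖]
    gcongr
    linarith

theorem integrableOn_smul_sandwich (S : I.Elem) {P Q : ℝ → X →L[ℂ] X} {a b : ℝ}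
    (hP : ContinuousOn P (Icc a b)) (hQ : ContinuousOn Q (Icc a b))
    (τ : Measure ℝ) [IsFiniteMeasure τ] :
    IntegrableOn (fun t : ℝ => (t : ℂ) • I.sandwich (P t) S (Q t)) (Icc a b) τ :=
  ContinuousOn.integrableOn_compact isCompact_Icc
    (Complex.continuous_ofReal.continuousOn.smul
      ((I.isBoundedBilinearMap_sandwich S).continuous.comp_continuousOn (hP.prodMk hQ)))

end OperatorIdeal

section Transformer

variable {X : Type*} [NormedAddCommGroup X] [NormedSpace ℂ X] [CompleteSpace X]
  {A : X →ₗ.[ℂ] X} {a b : ℝ}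

theorem MemV.integrableOn_fDerIntegrand (hA : MemV a b A) (I : OperatorIdeal X) (B : I.Elem)
    (τ : Measure ℝ) [IsFiniteMeasure τ] : IntegrableOn (fDerIntegrand I A B) (Icc a b) τ :=
  I.integrableOn_smul_sandwich B hA.continuousOn_opResolvent hA.continuousOn_opResolvent τ

theorem integrableOn_abs_Icc (a b : ℝ) (τ : Measure ℝ) [IsFiniteMeasure τ] :
    IntegrableOn (fun t : ℝ => |t|) (Icc a b) τ :=
  ContinuousOn.integrableOn_compact isCompact_Icc continuous_abs.continuousOn

theorem MemV.norm_fDer_le (hA : MemV a b A) (I : OperatorIdeal X) (B : I.Elem)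
    (τ : Measure ℝ) [IsFiniteMeasure τ] :
    ‖fDer I τ a b A B‖ ≤ (∫ t in Icc a b, |t| ∂τ) * mConst a b A ^ 2 * ‖B‖ := by
  have hm := mConst_nonneg a b A
  calc ‖fDer I τ a b A B‖ ≤ ∫ t in Icc a b, |t| * (mConst a b A ^ 2 * ‖B‖) ∂τ := by
        refine norm_integral_le_of_norm_le ((integrableOn_abs_Icc a b τ).mul_const _) ?_
        refine (ae_restrict_iff' measurableSet_Icc).2 (Filter.Eventually.of_forall fun t ht => ?_)
        have hR := hA.norm_opResolvent_le ht
        rw [fDerIntegrand, norm_smul, Complex.norm_real, Real.norm_eq_abs]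
        gcongr
        calc _ ≤ ‖opResolvent A (t : ℂ)‖ * ‖B‖ * ‖opResolvent A (t : ℂ)‖ :=
              I.norm_sandwich_le _ _ _
          _ ≤ mConst a b A * ‖B‖ * mConst a b A := by gcongr
          _ = mConst a b A ^ 2 * ‖B‖ := by ring
    _ = _ := by rw [integral_mul_const, mul_assoc]

/-- The transformer `B ↦ ∫_a^b R(t, A) B R(t, A) t dτ(t)` as a bounded operator on the ideal. -/
noncomputable def MemV.fDerCLM (hA : MemV a b A) (I : OperatorIdeal X) (τ : Measure ℝ)
    [IsFiniteMeasure τ] : I.Elem →L[ℂ] I.Elem :=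
  LinearMap.mkContinuous
    { toFun := fDer I τ a b A
      map_add' := fun B C => by
        rw [fDer, fDer, fDer, ← integral_add (hA.integrableOn_fDerIntegrand I B τ)
          (hA.integrableOn_fDerIntegrand I C τ)]
        congr 1
        funext t
        exact OperatorIdeal.Elem.val_injective I (by
          simp only [fDerIntegrand, OperatorIdeal.Elem.val_add, OperatorIdeal.Elem.val_smul,
            OperatorIdeal.val_sandwich, mul_add, add_mul, smul_add])
      map_smul' := fun c B => by
        rw [fDer, fDer, RingHom.id_apply, ← integral_smul]
        congr 1
        funext t
        exact OperatorIdeal.Elem.val_injective I (by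
          simp only [fDerIntegrand, OperatorIdeal.Elem.val_smul, OperatorIdeal.val_sandwich,
            mul_smul_comm, smul_mul_assoc, smul_comm c]) }
    _ fun B => hA.norm_fDer_le I B τ

@[simp] theorem MemV.fDerCLM_apply (hA : MemV a b A) (I : OperatorIdeal X) (τ : Measure ℝ)
    [IsFiniteMeasure τ] (B : I.Elem) : hA.fDerCLM I τ B = fDer I τ a b A B := rfl

/-- `f(A + B) − f(A) = ∫_a^b R(t, A + B) B R(t, A) t dτ(t)`. -/
theorem MemV.fOp_perturb_sub_fOp (hab : a ≤ b) (hA : MemV a b A) (I : OperatorIdeal X)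
    (τ : Measure ℝ) [IsFiniteMeasure τ] {B : I.Elem} (hB : ‖B.val‖ * mConst a b A ≤ 1 / 2) :
    fOp τ a b (ZRCalculus.perturb A B.val) - fOp τ a b A =
      (∫ t in Icc a b, (t : ℂ) • I.sandwich (opResolvent (ZRCalculus.perturb A B.val) (t : ℂ)) B
        (opResolvent A (t : ℂ)) ∂τ : I.Elem).val := by
  have hA' := hA.perturb hab hB
  rw [← I.valCLM_apply (∫ t in Icc a b, _ ∂τ), ← ContinuousLinearMap.integral_comp_comm _
    (I.integrableOn_smul_sandwich B hA'.continuousOn_opResolvent hA.continuousOn_opResolvent τ),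
    fOp, fOp, ← integral_sub (hA'.integrableOn_mulResolvent τ) (hA.integrableOn_mulResolvent τ)]
  refine setIntegral_congr_fun measurableSet_Icc fun t ht => ?_
  simp only [mulResolvent_eq (hA.mem_opResolventSet t ht),
    mulResolvent_eq (hA'.mem_opResolventSet t ht), OperatorIdeal.valCLM_apply,
    OperatorIdeal.Elem.val_smul, OperatorIdeal.val_sandwich, sub_sub_sub_cancel_right]
  rw [← smul_sub, hA.opResolvent_perturb_sub hB ht]

theorem MemV.fOp_perturb_sub_fOp_mem (hab : a ≤ b) (hA : MemV a b A) (I : OperatorIdeal X)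
    (τ : Measure ℝ) [IsFiniteMeasure τ] {B : I.Elem} (hB : ‖B.val‖ * mConst a b A ≤ 1 / 2) :
    fOp τ a b (ZRCalculus.perturb A B.val) - fOp τ a b A ∈ I.carrier := by
  rw [hA.fOp_perturb_sub_fOp hab I τ hB]
  exact OperatorIdeal.Elem.val_mem I _

theorem MemV.fIncrement_eq (hab : a ≤ b) (hA : MemV a b A) (I : OperatorIdeal X)
    (τ : Measure ℝ) [IsFiniteMeasure τ] {B : I.Elem} (hB : ‖B.val‖ * mConst a b A ≤ 1 / 2) :
    fIncrement I τ a b A B =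
      ∫ t in Icc a b, (t : ℂ) • I.sandwich (opResolvent (ZRCalculus.perturb A B.val) (t : ℂ)) B
        (opResolvent A (t : ℂ)) ∂τ := by
  have h := hA.fOp_perturb_sub_fOp_mem hab I τ hB
  have hinc : fIncrement I τ a b A B = (⟨_, h⟩ : I.carrier) := dif_pos h
  exact hinc.trans (OperatorIdeal.Elem.val_injective I (hA.fOp_perturb_sub_fOp hab I τ hB))

theorem MemV.norm_fIncrement_sub_fDer_le (hab : a ≤ b) (hA : MemV a b A) (I : OperatorIdeal X)
    (τ : Measure ℝ) [IsFiniteMeasure τ] {B : I.Elem} (hB : ‖B‖ * mConst a b A ≤ 1 / 2) :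
    ‖fIncrement I τ a b A B - fDer I τ a b A B‖ ≤
      2 * mConst a b A ^ 3 * (∫ t in Icc a b, |t| ∂τ) * ‖B‖ ^ 2 := by
  have hm := mConst_nonneg a b A
  have hBv : ‖B.val‖ * mConst a b A ≤ 1 / 2 :=
    (mul_le_mul_of_nonneg_right (OperatorIdeal.Elem.norm_val_le I B) hm).trans hB
  have hA' := hA.perturb hab hBv
  rw [hA.fIncrement_eq hab I τ hBv, fDer, ← integral_sub
    (I.integrableOn_smul_sandwich B hA'.continuousOn_opResolvent hA.continuousOn_opResolvent τ)
    (hA.integrableOn_fDerIntegrand I B τ)]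
  refine (norm_integral_le_of_norm_le
    ((integrableOn_abs_Icc a b τ).mul_const (2 * mConst a b A ^ 3 * ‖B‖ ^ 2)) ?_).trans_eq ?_
  · refine (ae_restrict_iff' measurableSet_Icc).2 (Filter.Eventually.of_forall fun t ht => ?_)
    have hR := hA.norm_opResolvent_le ht
    have hS := hA.norm_opResolvent_perturb_le hBv ht
    have hid := hA.opResolvent_perturb_sub hBv ht
    rw [fDerIntegrand]
    set R := opResolvent A (t : ℂ)
    set S := opResolvent (ZRCalculus.perturb A B.val) (t : ℂ)
    have heq : (t : ℂ) • I.sandwich S B R - (t : ℂ) • I.sandwich R B R =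
        (t : ℂ) • I.sandwich (S * B.val * R) B R :=
      OperatorIdeal.Elem.val_injective I (by
        simp only [OperatorIdeal.Elem.val_sub, OperatorIdeal.Elem.val_smul,
          OperatorIdeal.val_sandwich, ← smul_sub, ← sub_mul, hid])
    rw [heq, norm_smul, Complex.norm_real, Real.norm_eq_abs]
    gcongr
    calc ‖I.sandwich (S * B.val * R) B R‖ ≤ ‖S * B.val * R‖ * ‖B‖ * ‖R‖ :=
          I.norm_sandwich_le _ _ _
      _ ≤ ‖S‖ * ‖B.val‖ * ‖R‖ * ‖B‖ * ‖R‖ := by gcongr; exact norm_mul₃_le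
      _ ≤ 2 * mConst a b A * ‖B‖ * mConst a b A * ‖B‖ * mConst a b A := by
          gcongr
          exact OperatorIdeal.Elem.norm_val_le I B
      _ = 2 * mConst a b A ^ 3 * ‖B‖ ^ 2 := by ring
  · rw [integral_mul_const]
    ring

theorem MemV.hasFDerivAt_fIncrement (hab : a ≤ b) (hA : MemV a b A) (I : OperatorIdeal X)
    (τ : Measure ℝ) [IsFiniteMeasure τ] :
    HasFDerivAt (fIncrement I τ a b A) (hA.fDerCLM I τ) 0 := by
  have h₀ : fIncrement I τ a b A 0 = 0 := by
    have h := hA.norm_fIncrement_sub_fDer_le hab I τ (B := 0) (by simp)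
    rw [← hA.fDerCLM_apply, map_zero, sub_zero] at h
    simpa using h
  rw [hasFDerivAt_iff_isLittleO_nhds_zero]
  simp only [zero_add, h₀, sub_zero, hA.fDerCLM_apply]
  have hO : (fun B : I.Elem => fIncrement I τ a b A B - fDer I τ a b A B) =O[nhds 0]
      fun B : I.Elem => ‖B‖ ^ 2 := by
    have hcont : Continuous fun B : I.Elem => ‖B‖ * mConst a b A := by fun_prop
    refine Asymptotics.IsBigO.of_bound (2 * mConst a b A ^ 3 * ∫ t in Icc a b, |t| ∂τ) ?_
    filter_upwards [hcont.continuousAt.eventually_le_const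
      (by simp : ‖(0 : I.Elem)‖ * mConst a b A < 1 / 2)] with B hB
    simpa using hA.norm_fIncrement_sub_fDer_le hab I τ hB
  exact hO.trans_isLittleO (Asymptotics.isLittleO_norm_pow_id one_lt_two)

end Transformer

end ZRCalculus

theorem fOp_frechet_differentiable {X : Type*} [NormedAddCommGroup X] [NormedSpace ℂ X]
    [CompleteSpace X] (I : OperatorIdeal X) (a b : ℝ) (hab : a < b)
    (τ : Measure ℝ) [IsFiniteMeasure τ] (A : X →ₗ.[ℂ] X) (hA : MemV a b A) :
    -- the integrals defining `f(A)` and the transformer exist as Bochner integrals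
    IntegrableOn (fun t : ℝ => mulResolvent A (t : ℂ)) (Icc a b) τ ∧
    (∀ B : I.Elem, IntegrableOn (fDerIntegrand I A B) (Icc a b) τ) ∧
    -- the quantitative estimate
    (∀ ΔA : I.Elem, ‖ΔA‖ ≤ 1 / (2 * mConst a b A) →
      MemV a b (perturb A ΔA.val) ∧
      fOp τ a b (perturb A ΔA.val) - fOp τ a b A ∈ I.carrier ∧
      ‖fIncrement I τ a b A ΔA - fDer I τ a b A ΔA‖ ≤
        2 * mConst a b A ^ 3 * (∫ t in Icc a b, |t| ∂τ) * ‖ΔA‖ ^ 2) ∧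
    -- Fréchet differentiability, with the transformer as derivative
    ∃ T : I.Elem →L[ℂ] I.Elem,
      (∀ B : I.Elem, T B = fDer I τ a b A B) ∧
      HasFDerivAt (fIncrement I τ a b A) T 0 := by
  refine ⟨hA.integrableOn_mulResolvent τ, fun B => hA.integrableOn_fDerIntegrand I B τ,
    fun ΔA hΔ => ?_, hA.fDerCLM I τ, hA.fDerCLM_apply I τ,
    hA.hasFDerivAt_fIncrement hab.le I τ⟩
  have hm := mConst_nonneg a b A
  have hB : ‖ΔA‖ * mConst a b A ≤ 1 / 2 := by
    rcases hm.eq_or_lt with h | h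
    · simp [← h]
    · calc ‖ΔA‖ * mConst a b A ≤ 1 / (2 * mConst a b A) * mConst a b A := by gcongr
        _ = 1 / 2 := by field_simp
  have hBv : ‖ΔA.val‖ * mConst a b A ≤ 1 / 2 :=
    (mul_le_mul_of_nonneg_right (OperatorIdeal.Elem.norm_val_le I ΔA) hm).trans hB
  exact ⟨hA.perturb hab.le hBv, hA.fOp_perturb_sub_fOp_mem hab.le I τ hBv,
    hA.norm_fIncrement_sub_fDer_le hab.le I τ hB⟩
end

section
/- (Analyticity in the perturbation parameter.) Let $X$ be a complex Banach space, let $LB(X)$ be the algebra of bounded linear operators on $X$ with the operator norm $\|\cdot\|$, and let $a<b$ be real numbers. Let $(\mathcal I,\|\cdot\|_{\mathcal I})$ be an operator ideal in $X$, i.e. a two-sided ideal of $LB(X)$, complete in a norm $\|\cdot\|_{\mathcal I}$ with $\|PSQ\|_{\mathcal I}\le\|P\|\,\|S\|_{\mathcal I}\,\|Q\|$ and $\|S\|\le\|S\|_{\mathcal I}$ for all $P,Q\in LB(X)$, $S\in\mathcal I$ (for instance $\mathcal I=LB(X)$). Let $V_{[a,b]}(X)$ be the set of all closed densely defined operators $A$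 in $X$ (for instance bounded ones) whose resolvent set contains $[a,b]$; for such $A$ write $R(t,A)=(tI-A)^{-1}$, $m_A=\max_{t\in[a,b]}\|R(t,A)\|$ and $\delta_A=1/m_A$. Let $\tau$ be a finite positive Borel measure on $[a,b]$, let $f(z)=\int_a^b\frac{z}{t-z}\,d\tau(t)$ be the associated function of the class $ZR[a,b]$, and for $A\in V_{[a,b]}(X)$ put $f(A)=\int_a^b A\,R(t,A)\,d\tau(t)$, a Bochner integral in operator norm. Let $A\in V_{[a,b]}(X)$ and let $B\in\mathcal I$, $B\neq0$. For every $z\in\mathbb C$ with $|z|<\delta_A/\|B\|$, the operator $A+zB$ (with domain $D(A)$) belongs to $V_{[a,b]}(X)$, the integrals defining $f(A)$ and $f(A+zB)$ exist, $f(A+zB)-f(A)\in\mathcal I$, and $$f(A+zB)-f(A)=\sum_{n=1}^\infty z^nC_n,$$ where the series converges absolutely in the norm $\|\cdot\|_{\mathcal I}$ and, for $n\ge1$, $$C_n=\frac1{n!}\left.\frac{d^n}{dz^n}\bigl(f(A+zB)-f(A)\bigr)\right|_{z=0}=\int_a^b(R(t,A)B)^nR(t,A)\,t\,d\tau(t)\in\mathcal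 I$$ (the derivatives are taken in the norm $\|\cdot\|_{\mathcal I}$; the integral is a Bochner integral in operator norm, and it exists). Moreover, for all $n\ge1$, $$\|C_n\|\le m_A^{n+1}\|B\|^n\int_a^b|t|\,d\tau(t),\qquad \|C_n\|_{\mathcal I}\le m_A^{n+1}\|B\|^{n-1}\|B\|_{\mathcal I}\int_a^b|t|\,d\tau(t),$$ and the $\mathcal I$-valued function $z\mapsto f(A+zB)-f(A)$ is analytic on the disk $|z|<\delta_A/\|B\|$. -/
open MeasureTheory Set Filter Topology

section Resolvent

variable {X : Type*} [NormedAddCommGroup X] [NormedSpace ℂ X]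

/-- The bounded operator `R` is a two-sided inverse of `l·I - A : D(A) → X`, where `A` is a
(possibly unbounded) linear operator in `X` with domain `A.domain`. -/
structure IsResolventAt (A : X →ₗ.[ℂ] X) (l : ℂ) (R : X →L[ℂ] X) : Prop where
  mem_domain : ∀ x, R x ∈ A.domain
  right_inv : ∀ x, l • R x - A ⟨R x, mem_domain x⟩ = x
  left_inv : ∀ y : A.domain, R (l • (y : X) - A y) = y

/-- The resolvent set `ρ(A)`. -/
def opResolventSet (A : X →ₗ.[ℂ] X) : Set ℂ :=
  {l | ∃ R : X →L[ℂ] X, IsResolventAt A l R}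

open Classical in
/-- The resolvent `R(l, A) = (l·I - A)⁻¹` (and `0` for `l ∉ ρ(A)`). -/
noncomputable def opResolvent (A : X →ₗ.[ℂ] X) (l : ℂ) : X →L[ℂ] X :=
  if h : l ∈ opResolventSet A then Classical.choose h else 0

theorem isResolventAt_opResolvent {A : X →ₗ.[ℂ] X} {l : ℂ} (h : l ∈ opResolventSet A) :
    IsResolventAt A l (opResolvent A l) := by
  unfold opResolvent
  rw [dif_pos h]
  exact Classical.choose_spec h

/-- The composition `A ∘ R`, an everywhere defined bounded operator, for `R = (l·I - A)⁻¹`. -/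
noncomputable def IsResolventAt.opComp {A : X →ₗ.[ℂ] X} {l : ℂ} {R : X →L[ℂ] X}
    (h : IsResolventAt A l R) : X →L[ℂ] X where
  toLinearMap := A.toFun ∘ₗ R.toLinearMap.codRestrict A.domain h.mem_domain
  cont := by
    have e : (fun x => A ⟨R x, h.mem_domain x⟩) = fun x => l • R x - x := by
      funext x
      have := h.right_inv x
      rw [sub_eq_iff_eq_add] at this
      rw [this]
      abel
    change Continuous fun x => A ⟨R x, h.mem_domain x⟩
    rw [e]
    fun_prop

open Classical in
/-- The bounded operator `A·R(l, A)` (and `0` for `l ∉ ρ(A)`). -/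
noncomputable def opMulResolvent (A : X →ₗ.[ℂ] X) (l : ℂ) : X →L[ℂ] X :=
  if h : l ∈ opResolventSet A then (isResolventAt_opResolvent h).opComp else 0

/-- `A ∈ V_{[a,b]}(X)`: `A` is closed and densely defined, and `[a,b] ⊆ ρ(A)`. -/
structure MemVab (a b : ℝ) (A : X →ₗ.[ℂ] X) : Prop where
  isClosed : A.IsClosed
  dense_domain : Dense (A.domain : Set X)
  subset_resolventSet : ∀ t ∈ Icc a b, (t : ℂ) ∈ opResolventSet A

/-- `m_A = max_{t ∈ [a,b]} ‖R(t,A)‖`. -/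
noncomputable def mConst (a b : ℝ) (A : X →ₗ.[ℂ] X) : ℝ :=
  sSup ((fun t : ℝ => ‖opResolvent A (t : ℂ)‖) '' Icc a b)

/-- `δ_A = 1 / m_A`. -/
noncomputable def deltaConst (a b : ℝ) (A : X →ₗ.[ℂ] X) : ℝ :=
  1 / mConst a b A

/-- `f(A) = ∫_a^b A·R(t,A) dτ(t)`, a Bochner integral in operator norm, where
`f(z) = ∫_a^b z/(t-z) dτ(t)` is the function of class `ZR[a,b]` with representing measure `τ`. -/
noncomputable def fOp (τ : Measure ℝ) (a b : ℝ) (A : X →ₗ.[ℂ] X) : X →L[ℂ] X :=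
  ∫ t in Icc a b, opMulResolvent A (t : ℂ) ∂τ

/-- The integrand `(R(t,A)·B)ⁿ·R(t,A)·t` of the `n`-th coefficient. -/
noncomputable def coeffIntegrand (A : X →ₗ.[ℂ] X) (B : X →L[ℂ] X) (n : ℕ) (t : ℝ) : X →L[ℂ] X :=
  (t : ℂ) • ((opResolvent A (t : ℂ) * B) ^ n * opResolvent A (t : ℂ))

/-- The coefficient `C_n = ∫_a^b (R(t,A)·B)ⁿ·R(t,A)·t dτ(t)`. -/
noncomputable def coeffC (τ : Measure ℝ) (a b : ℝ) (A : X →ₗ.[ℂ] X) (B : X →L[ℂ] X) (n : ℕ) :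
    X →L[ℂ] X :=
  ∫ t in Icc a b, coeffIntegrand A B n t ∂τ

/-- The perturbed operator `A + z·B`, with domain `D(A)`. -/
def perturb (A : X →ₗ.[ℂ] X) (B : X →L[ℂ] X) (z : ℂ) : X →ₗ.[ℂ] X :=
  (z • B).toLinearMap +ᵥ A

end Resolvent

/-- An operator ideal in `X`: a two-sided ideal of the algebra of bounded operators on `X`, complete
in a norm `‖·‖_I` with `‖P·S·Q‖_I ≤ ‖P‖·‖S‖_I·‖Q‖` and `‖S‖ ≤ ‖S‖_I`. -/
structure OperatorIdeal (X : Type*) [NormedAddCommGroup X] [NormedSpace ℂ X] where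
  /-- the underlying linear subspace -/
  carrier : Submodule ℂ (X →L[ℂ] X)
  mul_mul_mem : ∀ (P Q : X →L[ℂ] X), ∀ S ∈ carrier, P * S * Q ∈ carrier
  /-- the norm of the ideal -/
  nrm : carrier → ℝ
  nrm_add_le : ∀ S T, nrm (S + T) ≤ nrm S + nrm T
  nrm_smul : ∀ (c : ℂ) S, nrm (c • S) = ‖c‖ * nrm S
  opNorm_le_nrm : ∀ S : carrier, ‖(S : X →L[ℂ] X)‖ ≤ nrm S
  nrm_mul_mul_le : ∀ (P Q : X →L[ℂ] X) (S : carrier),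
    nrm ⟨P * S * Q, mul_mul_mem P Q S S.2⟩ ≤ ‖P‖ * nrm S * ‖Q‖
  complete : ∀ u : ℕ → carrier,
    (∀ ε > 0, ∃ N, ∀ m ≥ N, ∀ n ≥ N, nrm (u m - u n) < ε) →
      ∃ S, Tendsto (fun n => nrm (u n - S)) atTop (𝓝 0)

namespace OperatorIdeal

variable {X : Type*} [NormedAddCommGroup X] [NormedSpace ℂ X]

/-- The elements of the ideal, as a type which carries the norm of the ideal. -/
def Elem (I : OperatorIdeal X) : Type _ := I.carrier

instance (I : OperatorIdeal X) : AddCommGroup I.Elem := inferInstanceAs (AddCommGroup I.carrier)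

instance (I : OperatorIdeal X) : Module ℂ I.Elem := inferInstanceAs (Module ℂ I.carrier)

instance (I : OperatorIdeal X) : Norm I.Elem := ⟨I.nrm⟩

/-- The inclusion of the ideal into the bounded operators. -/
def toOp (I : OperatorIdeal X) : I.Elem →ₗ[ℂ] (X →L[ℂ] X) := I.carrier.subtype

theorem normCore (I : OperatorIdeal X) : NormedSpace.Core ℂ I.Elem where
  norm_nonneg S := (norm_nonneg (I.toOp S)).trans (I.opNorm_le_nrm S)
  norm_smul c S := I.nrm_smul c S
  norm_triangle S T := I.nrm_add_le S T
  norm_eq_zero_iff S := by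
    constructor
    · intro h
      have h1 : ‖I.toOp S‖ ≤ 0 := (I.opNorm_le_nrm S).trans h.le
      exact Subtype.ext (norm_le_zero_iff.mp h1)
    · rintro rfl
      have := I.nrm_smul 0 0
      rw [norm_zero, zero_mul, zero_smul] at this
      exact this

noncomputable instance (I : OperatorIdeal X) : NormedAddCommGroup I.Elem :=
  NormedAddCommGroup.ofCore I.normCore

noncomputable instance (I : OperatorIdeal X) : NormedSpace ℂ I.Elem :=
  NormedSpace.ofCore I.normCore

end OperatorIdeal

section Resolvent

variable {X : Type*} [NormedAddCommGroup X] [NormedSpace ℂ X]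

theorem IsResolventAt.unique {A : X →ₗ.[ℂ] X} {l : ℂ} {R S : X →L[ℂ] X}
    (hR : IsResolventAt A l R) (hS : IsResolventAt A l S) : R = S := by
  ext x
  have h := hR.left_inv ⟨S x, hS.mem_domain x⟩
  rwa [hS.right_inv x] at h

theorem IsResolventAt.opResolvent_eq {A : X →ₗ.[ℂ] X} {l : ℂ} {R : X →L[ℂ] X}
    (h : IsResolventAt A l R) : opResolvent A l = R :=
  (isResolventAt_opResolvent ⟨R, h⟩).unique h

/-- On the resolvent set, `A·R(l, A) = l·R(l, A) - I`. -/
theorem opMulResolvent_eq {A : X →ₗ.[ℂ] X} {l : ℂ} (h : l ∈ opResolventSet A) :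
    opMulResolvent A l = l • opResolvent A l - 1 := by
  rw [opMulResolvent, dif_pos h]
  ext x
  have hx := (isResolventAt_opResolvent h).right_inv x
  change A ⟨opResolvent A l x, _⟩ = l • opResolvent A l x - x
  rw [sub_eq_iff_eq_add] at hx
  exact eq_sub_of_add_eq' hx.symm

/-- An operator with nonempty resolvent set is closed. -/
theorem IsResolventAt.isClosed {A : X →ₗ.[ℂ] X} {l : ℂ} {R : X →L[ℂ] X}
    (h : IsResolventAt A l R) : A.IsClosed := by
  have e : (A.graph : Set (X × X)) = {p | R (l • p.1 - p.2) = p.1} := by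
    ext ⟨x, y⟩
    simp only [SetLike.mem_coe, LinearPMap.mem_graph_iff, mem_ofPred_eq]
    constructor
    · rintro ⟨u, rfl, rfl⟩
      exact h.left_inv u
    · intro hx
      refine ⟨⟨R (l • x - y), h.mem_domain _⟩, hx, ?_⟩
      have h2 := h.right_inv (l • x - y)
      exact sub_right_injective (h2.trans (congrArg (fun w => l • w - y) hx.symm))
  rw [LinearPMap.IsClosed, e]
  exact isClosed_eq (by fun_prop) (by fun_prop)

/-- The resolvent identity. -/
theorem IsResolventAt.sub_eq {A : X →ₗ.[ℂ] X} {l m : ℂ} {R S : X →L[ℂ] X}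
    (hR : IsResolventAt A l R) (hS : IsResolventAt A m S) : S - R = (l - m) • (S * R) := by
  ext x
  have h := hS.left_inv ⟨R x, hR.mem_domain x⟩
  have hx := hR.right_inv x
  have e : m • R x - A ⟨R x, hR.mem_domain x⟩ = x - (l - m) • R x := by
    refine Eq.trans ?_ (congrArg (fun w => w - (l - m) • R x) hx)
    simp only [sub_smul]
    abel
  simp only [e, map_sub, map_smul] at h
  change S x - R x = (l - m) • S (R x)
  rw [sub_eq_iff_eq_add] at h ⊢
  exact h.trans (add_comm _ _)

theorem continuousOn_opResolvent [CompleteSpace X] (A : X →ₗ.[ℂ] X) :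
    ContinuousOn (opResolvent A) (opResolventSet A) := by
  intro l hl
  have hR := isResolventAt_opResolvent hl
  set R := opResolvent A l with hRdef
  have hc : Continuous fun s : ℂ => 1 + (s - l) • R := by fun_prop
  have hinv : ContinuousAt (fun s : ℂ => R * Ring.inverse (1 + (s - l) • R)) l := by
    refine continuousAt_const.mul (ContinuousAt.comp (g := Ring.inverse) ?_ hc.continuousAt)
    have := NormedRing.inverse_continuousAt (1 : (X →L[ℂ] X)ˣ)
    simpa using this
  have hunit : ∀ᶠ s in 𝓝 l, IsUnit (1 + (s - l) • R) := by
    have : {x : X →L[ℂ] X | IsUnit x} ∈ 𝓝 (1 + (l - l) • R) := by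
      simpa using (Units.nhds (1 : (X →L[ℂ] X)ˣ))
    exact hc.continuousAt this
  refine hinv.continuousWithinAt.congr_of_eventuallyEq ?_ (by simp [hRdef])
  filter_upwards [self_mem_nhdsWithin, nhdsWithin_le_nhds hunit] with s hs hu
  have hS := isResolventAt_opResolvent hs
  have h := hR.sub_eq hS
  have h2 : opResolvent A s * (1 + (s - l) • R) = R := by
    rw [mul_add, mul_one, mul_smul_comm, ← neg_sub l s, neg_smul, ← h]
    abel
  calc opResolvent A s = opResolvent A s * (1 + (s - l) • R) * Ring.inverse (1 + (s - l) • R) := by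
        rw [mul_assoc, Ring.mul_inverse_cancel _ hu, mul_one]
    _ = R * Ring.inverse (1 + (s - l) • R) := by rw [h2]

/-- If `V` is the inverse of `I - P·R(l, A)` then `R(l, A + P) = R(l, A)·V`. -/
theorem IsResolventAt.perturb {A : X →ₗ.[ℂ] X} {l : ℂ} {R : X →L[ℂ] X}
    (h : IsResolventAt A l R) {B V : X →L[ℂ] X} {z : ℂ}
    (hV₁ : (1 - z • (B * R)) * V = 1) (hV₂ : V * (1 - z • (B * R)) = 1) :
    IsResolventAt (perturb A B z) l (R * V) where
  mem_domain x := h.mem_domain (V x)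
  right_inv x := by
    have h1 := h.right_inv (V x)
    have h2 : V x - z • B (R (V x)) = x := by simpa using DFunLike.congr_fun hV₁ x
    change l • R (V x) - (z • B (R (V x)) + A ⟨R (V x), h.mem_domain (V x)⟩) = x
    refine Eq.trans ?_ ((congrArg (fun w => w - z • B (R (V x))) h1).trans h2)
    abel
  left_inv y := by
    have h1 := h.left_inv y
    change R (V (l • (y : X) - (z • B y + A y))) = y
    have h2 : V (l • (y : X) - A y - z • B (R (l • (y : X) - A y))) = l • (y : X) - A y :=
      DFunLike.congr_fun hV₂ (l • (y : X) - A y)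
    rw [h1] at h2
    rw [add_comm, ← sub_sub]
    exact (congrArg R h2).trans h1

theorem mul_pow_mul_eq {M : Type*} [Monoid M] (R B : M) (n : ℕ) :
    R * (B * R) ^ n = (R * B) ^ n * R := by
  induction n with
  | zero => simp
  | succ n ih => rw [pow_succ, ← mul_assoc, ih, pow_succ]; simp only [mul_assoc]

/-- The Neumann series of the resolvent of a perturbed operator. -/
theorem IsResolventAt.perturb_neumann [CompleteSpace X] {A : X →ₗ.[ℂ] X} {l : ℂ}
    {R B : X →L[ℂ] X} {z : ℂ} (h : IsResolventAt A l R) (hz : ‖z • (B * R)‖ < 1) :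
    ∃ S, IsResolventAt (_root_.perturb A B z) l S ∧
      HasSum (fun n : ℕ => z ^ n • ((R * B) ^ n * R)) S := by
  refine ⟨_, h.perturb (mul_neg_geom_series _ hz) (geom_series_mul_neg _ hz), ?_⟩
  have hs := (summable_geometric_of_norm_lt_one hz).hasSum.mul_left R
  simpa only [smul_pow, mul_smul_comm, mul_pow_mul_eq] using hs

end Resolvent

section PowerSeries

variable {E : Type*} [NormedAddCommGroup E] [NormedSpace ℂ E]

/-- A vector-valued power series whose coefficients satisfy `‖c n‖ ≤ K·qⁿ` represents its sum on
the disk of radius `q⁻¹`. -/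
theorem hasFPowerSeriesOnBall_of_norm_coeff_le [CompleteSpace E] (c : ℕ → E) {K q : ℝ} (hq : 0 < q)
    (hc : ∀ n, ‖c n‖ ≤ K * q ^ n) :
    HasFPowerSeriesOnBall (fun z : ℂ => ∑' n : ℕ, z ^ n • c n)
      (fun n => ContinuousMultilinearMap.mkPiRing ℂ (Fin n) (c n)) 0 (ENNReal.ofReal q⁻¹) := by
  set p : FormalMultilinearSeries ℂ ℂ E :=
    fun n => ContinuousMultilinearMap.mkPiRing ℂ (Fin n) (c n) with hp
  have hpos : 0 < ENNReal.ofReal q⁻¹ := ENNReal.ofReal_pos.mpr (inv_pos.mpr hq)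
  have hr : ENNReal.ofReal q⁻¹ ≤ p.radius := by
    refine p.le_radius_of_bound K (r := Real.toNNReal q⁻¹) fun n => ?_
    rw [Real.coe_toNNReal _ (inv_pos.mpr hq).le, hp, ContinuousMultilinearMap.norm_mkPiRing]
    calc ‖c n‖ * q⁻¹ ^ n ≤ K * q ^ n * q⁻¹ ^ n := by gcongr; exact hc n
      _ = K := by rw [mul_assoc, ← mul_pow, mul_inv_cancel₀ hq.ne', one_pow, mul_one]
  have h := (p.hasFPowerSeriesOnBall (hpos.trans_le hr)).mono hpos hr
  have e : p.sum = fun z : ℂ => ∑' n : ℕ, z ^ n • c n := by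
    funext z
    simp [FormalMultilinearSeries.sum, hp]
  rwa [e] at h

theorem summable_norm_pow_smul {c : ℕ → E} {K q : ℝ} (hq : 0 < q)
    (hc : ∀ n, ‖c n‖ ≤ K * q ^ n) {z : ℂ} (hz : ‖z‖ * q < 1) :
    Summable fun n : ℕ => ‖z ^ n • c n‖ := by
  refine Summable.of_nonneg_of_le (fun _ => norm_nonneg _) (fun n => ?_)
    ((summable_geometric_of_lt_one (by positivity) hz).mul_left K)
  rw [norm_smul, norm_pow, mul_pow]
  calc ‖z‖ ^ n * ‖c n‖ ≤ ‖z‖ ^ n * (K * q ^ n) := by gcongr; exact hc n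
    _ = K * (‖z‖ ^ n * q ^ n) := by ring

theorem HasFPowerSeriesOnBall.coeff_eq_iteratedDeriv [CompleteSpace E] {c : ℕ → E} {F : ℂ → E}
    {r : ENNReal} (h : HasFPowerSeriesOnBall F
      (fun n => ContinuousMultilinearMap.mkPiRing ℂ (Fin n) (c n)) 0 r) (n : ℕ) :
    c n = ((n.factorial : ℂ)⁻¹) • iteratedDeriv n F 0 := by
  have h1 := h.factorial_smul 1 n
  rw [iteratedDeriv_eq_iteratedFDeriv, ← h1, ← Nat.cast_smul_eq_nsmul ℂ,
    inv_smul_smul₀ (Nat.cast_ne_zero.mpr n.factorial_ne_zero)]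
  simp

end PowerSeries

namespace OperatorIdeal

variable {X : Type*} [NormedAddCommGroup X] [NormedSpace ℂ X] (I : OperatorIdeal X)

instance completeSpace_elem : CompleteSpace I.Elem := by
  refine Metric.complete_of_cauchySeq_tendsto fun u hu => ?_
  obtain ⟨S, hS⟩ := I.complete u fun ε hε => by
    have h := Metric.cauchySeq_iff.mp hu ε hε
    simp only [dist_eq_norm] at h
    exact h
  exact ⟨S, tendsto_iff_norm_sub_tendsto_zero.mpr hS⟩

/-- The inclusion of the ideal into the bounded operators, as a contraction. -/
noncomputable def toOpL : I.Elem →L[ℂ] (X →L[ℂ] X) :=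
  I.toOp.mkContinuous 1 fun S => (I.opNorm_le_nrm S).trans_eq (one_mul _).symm

@[simp]
theorem toOpL_apply (S : I.Elem) : I.toOpL S = I.toOp S := rfl

/-- The map `(P, Q) ↦ P·S·Q` into the ideal. -/
noncomputable def sandwich (S : I.Elem) : (X →L[ℂ] X) →L[ℂ] (X →L[ℂ] X) →L[ℂ] I.Elem :=
  LinearMap.mkContinuous₂
    (LinearMap.mk₂ ℂ
      (fun P Q => (⟨P * I.toOp S * Q, I.mul_mul_mem P Q _ S.2⟩ : I.carrier) : _ → _ → I.Elem)
      (fun P P' Q => Subtype.ext (by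
        change (P + P') * I.toOp S * Q = P * I.toOp S * Q + P' * I.toOp S * Q
        rw [add_mul, add_mul]))
      (fun c P Q => Subtype.ext (by
        change (c • P) * I.toOp S * Q = c • (P * I.toOp S * Q)
        rw [smul_mul_assoc, smul_mul_assoc]))
      (fun P Q Q' => Subtype.ext (by
        change P * I.toOp S * (Q + Q') = P * I.toOp S * Q + P * I.toOp S * Q'
        rw [mul_add]))
      (fun c P Q => Subtype.ext (by
        change P * I.toOp S * (c • Q) = c • (P * I.toOp S * Q)
        rw [mul_smul_comm])))
    ‖S‖ fun P Q => (I.nrm_mul_mul_le P Q S).trans_eq (by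
      change ‖P‖ * ‖S‖ * ‖Q‖ = _
      ring)

theorem toOp_sandwich (S : I.Elem) (P Q : X →L[ℂ] X) :
    I.toOp (I.sandwich S P Q) = P * I.toOp S * Q := rfl

theorem norm_sandwich_le (S : I.Elem) (P Q : X →L[ℂ] X) :
    ‖I.sandwich S P Q‖ ≤ ‖P‖ * ‖S‖ * ‖Q‖ :=
  I.nrm_mul_mul_le P Q S

end OperatorIdeal

section Perturbation

variable {X : Type*} [NormedAddCommGroup X] [NormedSpace ℂ X] {a b : ℝ} {A : X →ₗ.[ℂ] X}

theorem IsResolventAt.ne_zero [Nontrivial X] {l : ℂ} {R : X →L[ℂ] X} (h : IsResolventAt A l R) :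
    R ≠ 0 := by
  rintro rfl
  obtain ⟨x, hx⟩ := exists_ne (0 : X)
  apply hx
  have h0 : A ⟨(0 : X →L[ℂ] X) x, h.mem_domain x⟩ = 0 := A.map_zero
  rw [← h.right_inv x, h0]
  simp

theorem norm_mul_pow_mul_le {R B : X →L[ℂ] X} {m : ℝ} (h : ‖R‖ ≤ m) (n : ℕ) :
    ‖(R * B) ^ n * R‖ ≤ m ^ (n + 1) * ‖B‖ ^ n := by
  have hm : 0 ≤ m := (norm_nonneg R).trans h
  induction n with
  | zero => simpa using h
  | succ n ih =>
    rw [pow_succ', mul_assoc]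
    calc ‖R * B * ((R * B) ^ n * R)‖ ≤ ‖R‖ * ‖B‖ * ‖(R * B) ^ n * R‖ :=
          (norm_mul_le _ _).trans (by gcongr; exact norm_mul_le _ _)
      _ ≤ m * ‖B‖ * (m ^ (n + 1) * ‖B‖ ^ n) := by gcongr
      _ = m ^ (n + 1 + 1) * ‖B‖ ^ (n + 1) := by ring

variable [CompleteSpace X]

theorem MemVab.continuousOn_opResolvent (hA : MemVab a b A) :
    ContinuousOn (fun t : ℝ => opResolvent A (t : ℂ)) (Icc a b) :=
  (_root_.continuousOn_opResolvent A).comp Complex.continuous_ofReal.continuousOn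
    hA.subset_resolventSet

theorem MemVab.norm_opResolvent_le (hA : MemVab a b A) {t : ℝ} (ht : t ∈ Icc a b) :
    ‖opResolvent A (t : ℂ)‖ ≤ mConst a b A :=
  le_csSup (isCompact_Icc.image_of_continuousOn hA.continuousOn_opResolvent.norm).bddAbove
    (mem_image_of_mem _ ht)

theorem MemVab.mConst_pos [Nontrivial X] (hA : MemVab a b A) (hab : a ≤ b) :
    0 < mConst a b A := by
  have ha : a ∈ Icc a b := left_mem_Icc.mpr hab
  have h := (isResolventAt_opResolvent (hA.subset_resolventSet a ha)).ne_zero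
  exact (norm_pos_iff.mpr h).trans_le (hA.norm_opResolvent_le ha)

theorem MemVab.integrableOn_opMulResolvent (hA : MemVab a b A) (τ : Measure ℝ)
    [IsFiniteMeasure τ] :
    IntegrableOn (fun t : ℝ => opMulResolvent A (t : ℂ)) (Icc a b) τ := by
  refine ContinuousOn.integrableOn_compact isCompact_Icc ?_
  refine ContinuousOn.congr (f := fun t : ℝ => (t : ℂ) • opResolvent A (t : ℂ) - 1) ?_
    fun t ht => opMulResolvent_eq (hA.subset_resolventSet t ht)
  exact (Complex.continuous_ofReal.continuousOn.smul hA.continuousOn_opResolvent).sub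
    continuousOn_const

theorem MemVab.integrableOn_coeffIntegrand (hA : MemVab a b A) (τ : Measure ℝ)
    [IsFiniteMeasure τ] (B : X →L[ℂ] X) (n : ℕ) :
    IntegrableOn (coeffIntegrand A B n) (Icc a b) τ := by
  refine ContinuousOn.integrableOn_compact isCompact_Icc ?_
  have hR := hA.continuousOn_opResolvent
  exact Complex.continuous_ofReal.continuousOn.smul
    (((hR.mul continuousOn_const).pow n).mul hR)

theorem MemVab.norm_coeffIntegrand_le (hA : MemVab a b A) (B : X →L[ℂ] X) (n : ℕ) {t : ℝ}
    (ht : t ∈ Icc a b) :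
    ‖coeffIntegrand A B n t‖ ≤ mConst a b A ^ (n + 1) * ‖B‖ ^ n * |t| := by
  rw [coeffIntegrand, norm_smul, Complex.norm_real, Real.norm_eq_abs, mul_comm]
  gcongr
  exact norm_mul_pow_mul_le (hA.norm_opResolvent_le ht) n

theorem integrableOn_abs_Icc (τ : Measure ℝ) [IsFiniteMeasure τ] :
    IntegrableOn (fun t : ℝ => |t|) (Icc a b) τ :=
  continuous_abs.continuousOn.integrableOn_compact isCompact_Icc

theorem MemVab.norm_coeffC_le (hA : MemVab a b A) (τ : Measure ℝ) [IsFiniteMeasure τ]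
    (B : X →L[ℂ] X) (n : ℕ) :
    ‖coeffC τ a b A B n‖ ≤ mConst a b A ^ (n + 1) * ‖B‖ ^ n * ∫ t in Icc a b, |t| ∂τ := by
  rw [← integral_const_mul]
  refine norm_integral_le_of_norm_le ((integrableOn_abs_Icc τ).const_mul _) ?_
  filter_upwards [ae_restrict_mem measurableSet_Icc] with t ht
  exact hA.norm_coeffIntegrand_le B n ht

theorem MemVab.norm_smul_mul_opResolvent_lt_one (hA : MemVab a b A) {B : X →L[ℂ] X} {z : ℂ}
    (hz : ‖z‖ * (mConst a b A * ‖B‖) < 1) {t : ℝ} (ht : t ∈ Icc a b) :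
    ‖z • (B * opResolvent A (t : ℂ))‖ < 1 := by
  refine lt_of_le_of_lt ?_ hz
  rw [norm_smul, mul_comm (mConst a b A)]
  gcongr
  exact (norm_mul_le _ _).trans (by gcongr; exact hA.norm_opResolvent_le ht)

theorem MemVab.perturb (hA : MemVab a b A) (hab : a ≤ b) {B : X →L[ℂ] X} {z : ℂ}
    (hz : ‖z‖ * (mConst a b A * ‖B‖) < 1) : MemVab a b (perturb A B z) := by
  have h : ∀ t ∈ Icc a b, ∃ S, IsResolventAt (_root_.perturb A B z) (t : ℂ) S := fun t ht =>
    let ⟨S, hS, _⟩ := (isResolventAt_opResolvent (hA.subset_resolventSet t ht)).perturb_neumann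
      (hA.norm_smul_mul_opResolvent_lt_one hz ht)
    ⟨S, hS⟩
  obtain ⟨S, hS⟩ := h a (left_mem_Icc.mpr hab)
  exact ⟨hS.isClosed, hA.dense_domain, h⟩

/-- The power series expansion of the integrand of `f(A + z·B) - f(A)`. -/
theorem MemVab.hasSum_coeffIntegrand (hA : MemVab a b A) {B : X →L[ℂ] X} {z : ℂ}
    (hz : ‖z‖ * (mConst a b A * ‖B‖) < 1) {t : ℝ} (ht : t ∈ Icc a b) :
    HasSum (fun n : ℕ => z ^ (n + 1) • coeffIntegrand A B (n + 1) t)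
      (opMulResolvent (_root_.perturb A B z) (t : ℂ) - opMulResolvent A (t : ℂ)) := by
  have htA := hA.subset_resolventSet t ht
  obtain ⟨S, hS, hsum⟩ := (isResolventAt_opResolvent htA).perturb_neumann
    (hA.norm_smul_mul_opResolvent_lt_one hz ht)
  rw [opMulResolvent_eq ⟨S, hS⟩, opMulResolvent_eq htA, hS.opResolvent_eq, sub_sub_sub_cancel_right,
    ← smul_sub]
  have h := ((hasSum_nat_add_iff' 1).mpr hsum).const_smul (t : ℂ)
  simpa [coeffIntegrand, smul_comm (t : ℂ)] using h

/-- The power series expansion of `f(A + z·B) - f(A)` in operator norm. -/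
theorem MemVab.hasSum_coeffC (hA : MemVab a b A) (hab : a ≤ b) (τ : Measure ℝ)
    [IsFiniteMeasure τ] {B : X →L[ℂ] X} {z : ℂ} (hz : ‖z‖ * (mConst a b A * ‖B‖) < 1) :
    HasSum (fun n : ℕ => z ^ (n + 1) • coeffC τ a b A B (n + 1))
      (fOp τ a b (_root_.perturb A B z) - fOp τ a b A) := by
  have hm : 0 ≤ mConst a b A :=
    (norm_nonneg _).trans (hA.norm_opResolvent_le (left_mem_Icc.mpr hab))
  have hint : ∀ n : ℕ, IntegrableOn (fun t => z ^ (n + 1) • coeffIntegrand A B (n + 1) t)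
      (Icc a b) τ := fun n => (hA.integrableOn_coeffIntegrand τ B (n + 1)).smul (z ^ (n + 1))
  have hsum : Summable fun n : ℕ =>
      ∫ t in Icc a b, ‖z ^ (n + 1) • coeffIntegrand A B (n + 1) t‖ ∂τ := by
    refine Summable.of_nonneg_of_le (fun _ => integral_nonneg fun _ => norm_nonneg _)
      (fun n => ?_) (((summable_nat_add_iff 1).mpr (summable_geometric_of_lt_one (by positivity)
        hz)).mul_left (mConst a b A * ∫ t in Icc a b, |t| ∂τ))
    calc ∫ t in Icc a b, ‖z ^ (n + 1) • coeffIntegrand A B (n + 1) t‖ ∂τ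
        ≤ ∫ t in Icc a b,
            ‖z‖ ^ (n + 1) * (mConst a b A ^ (n + 1 + 1) * ‖B‖ ^ (n + 1)) * |t| ∂τ := by
          refine setIntegral_mono_on (hint n).norm ((integrableOn_abs_Icc τ).const_mul _)
            measurableSet_Icc fun t ht => ?_
          rw [norm_smul, norm_pow, mul_assoc]
          gcongr
          exact hA.norm_coeffIntegrand_le B (n + 1) ht
      _ = mConst a b A * (∫ t in Icc a b, |t| ∂τ) * (‖z‖ * (mConst a b A * ‖B‖)) ^ (n + 1) := by
          rw [integral_const_mul]
          ring
  have h := hasSum_integral_of_summable_integral_norm hint hsum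
  have e : ∫ t in Icc a b, ∑' n : ℕ, z ^ (n + 1) • coeffIntegrand A B (n + 1) t ∂τ =
      fOp τ a b (_root_.perturb A B z) - fOp τ a b A := by
    rw [fOp, fOp, ← integral_sub ((hA.perturb hab hz).integrableOn_opMulResolvent τ)
      (hA.integrableOn_opMulResolvent τ)]
    exact setIntegral_congr_fun measurableSet_Icc fun t ht =>
      (hA.hasSum_coeffIntegrand hz ht).tsum_eq
  rw [e] at h
  simp only [integral_smul] at h
  exact h

end Perturbation

namespace OperatorIdeal

variable {X : Type*} [NormedAddCommGroup X] [NormedSpace ℂ X]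
  (I : OperatorIdeal X)

/-- The integrand `(R(t,A)·B)ⁿ⁺¹·R(t,A)·t` as an element of the ideal. -/
noncomputable def coeffIntegrandElem (A : X →ₗ.[ℂ] X) (B : I.Elem) (n : ℕ) (t : ℝ) : I.Elem :=
  (t : ℂ) • I.sandwich B ((opResolvent A (t : ℂ) * I.toOp B) ^ n * opResolvent A (t : ℂ))
    (opResolvent A (t : ℂ))

theorem toOp_coeffIntegrandElem (A : X →ₗ.[ℂ] X) (B : I.Elem) (n : ℕ) (t : ℝ) :
    I.toOp (I.coeffIntegrandElem A B n t) = coeffIntegrand A (I.toOp B) (n + 1) t := by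
  rw [coeffIntegrandElem, map_smul, toOp_sandwich, coeffIntegrand, pow_succ]
  simp only [mul_assoc]

/-- The coefficient `C_n` as an element of the ideal, for `n ≥ 1`; the value at `0` is `0`. -/
noncomputable def coeffElem (τ : Measure ℝ) (a b : ℝ) (A : X →ₗ.[ℂ] X) (B : I.Elem) : ℕ → I.Elem
  | 0 => 0
  | n + 1 => ∫ t in Icc a b, I.coeffIntegrandElem A B n t ∂τ

variable [CompleteSpace X] {I} {a b : ℝ} {A : X →ₗ.[ℂ] X}

theorem integrableOn_coeffIntegrandElem (hA : MemVab a b A) (τ : Measure ℝ) [IsFiniteMeasure τ]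
    (B : I.Elem) (n : ℕ) : IntegrableOn (I.coeffIntegrandElem A B n) (Icc a b) τ := by
  refine ContinuousOn.integrableOn_compact isCompact_Icc ?_
  have hR := hA.continuousOn_opResolvent
  exact Complex.continuous_ofReal.continuousOn.smul (((I.sandwich B).continuous.comp_continuousOn
    (((hR.mul continuousOn_const).pow n).mul hR)).clm_apply hR)

theorem toOp_coeffElem (hA : MemVab a b A) (τ : Measure ℝ) [IsFiniteMeasure τ] (B : I.Elem)
    (n : ℕ) : I.toOp (I.coeffElem τ a b A B (n + 1)) = coeffC τ a b A (I.toOp B) (n + 1) := by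
  have h := I.toOpL.integral_comp_comm (integrableOn_coeffIntegrandElem hA τ B n)
  simp only [toOpL_apply, toOp_coeffIntegrandElem] at h
  exact h.symm

theorem norm_coeffElem_le (hA : MemVab a b A) (τ : Measure ℝ) [IsFiniteMeasure τ] (B : I.Elem)
    (n : ℕ) : ‖I.coeffElem τ a b A B (n + 1)‖ ≤
      mConst a b A ^ (n + 1 + 1) * ‖I.toOp B‖ ^ n * ‖B‖ * ∫ t in Icc a b, |t| ∂τ := by
  rw [← integral_const_mul]
  refine norm_integral_le_of_norm_le ((integrableOn_abs_Icc τ).const_mul _) ?_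
  filter_upwards [ae_restrict_mem measurableSet_Icc] with t ht
  have hR := hA.norm_opResolvent_le ht
  have hm := (norm_nonneg _).trans hR
  rw [coeffIntegrandElem, norm_smul, Complex.norm_real, Real.norm_eq_abs, mul_comm]
  gcongr
  calc _ ≤ _ := I.norm_sandwich_le B _ _
    _ ≤ mConst a b A ^ (n + 1) * ‖I.toOp B‖ ^ n * ‖B‖ * mConst a b A := by
      gcongr
      exact norm_mul_pow_mul_le hR n
    _ = _ := by ring

end OperatorIdeal

/-- Analyticity of `z ↦ f(A + z·B) - f(A)` in the norm of an operator ideal `I ∋ B`, on the disk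
`|z| < δ_A / ‖B‖`. Here `F z` is the element `f(A + z·B) - f(A)` of `I` and, for `n ≥ 1`, `C n` is
the element `C_n` of `I`; `‖F z‖`, `‖C n‖`, sums, derivatives and analyticity refer to the norm
of `I`, while `‖I.toOp B‖` is the operator norm of `B`. -/
theorem fOp_analytic_in_parameter {X : Type*} [NormedAddCommGroup X] [NormedSpace ℂ X]
    [CompleteSpace X] (I : OperatorIdeal X) (a b : ℝ) (hab : a < b)
    (τ : Measure ℝ) [IsFiniteMeasure τ]
    (A : X →ₗ.[ℂ] X) (hA : MemVab a b A) (B : I.Elem) (hB : B ≠ 0) :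
    ∃ (F : ℂ → I.Elem) (C : ℕ → I.Elem),
      (∀ z ∈ Metric.ball (0 : ℂ) (deltaConst a b A / ‖I.toOp B‖),
        MemVab a b (perturb A (I.toOp B) z) ∧
        IntegrableOn (fun t : ℝ => opMulResolvent (perturb A (I.toOp B) z) (t : ℂ)) (Icc a b) τ ∧
        I.toOp (F z) = fOp τ a b (perturb A (I.toOp B) z) - fOp τ a b A ∧
        Summable (fun n : ℕ => ‖z ^ (n + 1) • C (n + 1)‖) ∧
        HasSum (fun n : ℕ => z ^ (n + 1) • C (n + 1)) (F z)) ∧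
      (∀ n : ℕ, 1 ≤ n →
        IntegrableOn (coeffIntegrand A (I.toOp B) n) (Icc a b) τ ∧
        I.toOp (C n) = coeffC τ a b A (I.toOp B) n ∧
        C n = ((n.factorial : ℂ)⁻¹) • iteratedDeriv n F 0 ∧
        ‖I.toOp (C n)‖ ≤
          mConst a b A ^ (n + 1) * ‖I.toOp B‖ ^ n * ∫ t in Icc a b, |t| ∂τ ∧
        ‖C n‖ ≤
          mConst a b A ^ (n + 1) * ‖I.toOp B‖ ^ (n - 1) * ‖B‖ * ∫ t in Icc a b, |t| ∂τ) ∧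
      AnalyticOnNhd ℂ F (Metric.ball (0 : ℂ) (deltaConst a b A / ‖I.toOp B‖)) := by
  have hB' : I.toOp B ≠ 0 := fun h => hB (Subtype.ext h)
  have : Nontrivial X := by
    by_contra hX
    rw [not_nontrivial_iff_subsingleton] at hX
    exact hB' (Subsingleton.elim _ _)
  set m := mConst a b A with hm_def
  set β := ‖I.toOp B‖ with hβ_def
  set T := ∫ t in Icc a b, |t| ∂τ with hT_def
  have hm : 0 < m := hA.mConst_pos hab.le
  have hβ : 0 < β := norm_pos_iff.mpr hB'
  have hT : 0 ≤ T := integral_nonneg fun _ => abs_nonneg _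
  have hq : 0 < m * β := mul_pos hm hβ
  have hr : deltaConst a b A / β = (m * β)⁻¹ := by
    rw [deltaConst, ← hm_def, one_div, div_eq_mul_inv, mul_inv]
  rw [hr]
  set C := I.coeffElem τ a b A B with hC_def
  have hC : ∀ n, ‖C n‖ ≤ m * ‖B‖ * T / β * (m * β) ^ n := by
    rintro (_ | n)
    · rw [hC_def, OperatorIdeal.coeffElem, norm_zero]
      positivity
    · refine (OperatorIdeal.norm_coeffElem_le hA τ B n).trans_eq ?_
      rw [← hm_def, ← hβ_def, ← hT_def]
      field_simp
      ring
  have hF := hasFPowerSeriesOnBall_of_norm_coeff_le C hq hC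
  refine ⟨fun z => ∑' n : ℕ, z ^ n • C n, C, fun z hz => ?_, fun n hn => ?_, ?_⟩
  · rw [mem_ball_zero_iff] at hz
    have hz' : ‖z‖ * (m * β) < 1 := (lt_inv_mul_iff₀' hq).mp (by simpa using hz)
    have hs := summable_norm_pow_smul hq hC hz'
    have hsum : HasSum (fun n : ℕ => z ^ (n + 1) • C (n + 1)) (∑' n : ℕ, z ^ n • C n) := by
      have h := (hasSum_nat_add_iff' 1).mpr hs.of_norm.hasSum
      simpa [hC_def, OperatorIdeal.coeffElem] using h
    have hV := hA.perturb hab.le hz'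
    refine ⟨hV, hV.integrableOn_opMulResolvent τ, ?_, (summable_nat_add_iff 1).mpr hs, hsum⟩
    refine (hsum.mapL I.toOpL).unique ?_
    simpa only [map_smul, OperatorIdeal.toOpL_apply, hC_def, OperatorIdeal.toOp_coeffElem hA]
      using hA.hasSum_coeffC hab.le τ hz'
  · obtain ⟨k, rfl⟩ := Nat.exists_eq_add_of_le' hn
    have hop := OperatorIdeal.toOp_coeffElem hA τ B k
    refine ⟨hA.integrableOn_coeffIntegrand τ _ _, hop, hF.coeff_eq_iteratedDeriv _, ?_,
      OperatorIdeal.norm_coeffElem_le hA τ B k⟩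
    rw [hC_def, hop]
    exact hA.norm_coeffC_le τ _ _
  · have h := hF.analyticOnNhd
    rwa [Metric.eball_ofReal] at h
end
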